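/- arXiv:2107.01794 — 5 statements merged into one kernel-verified Lean document; each statement's English description precedes it below -/
import Mathlib

section
/- Suppose γ > 0 and β < 0. Then for every integer n, every Floquet exponent ξ ∈ (0, 1/2], and every k > 0, the collision ω(n+ξ) = ω(n+1+ξ) does NOT hold, where c₀ = γ/k² + βk² and ω(x) = k²·x·(c₀ − βk²x²) − γ/x. -/
/-- Dispersion function of the linearized Ostrovsky equation,
with `c₀ = γ/k² + βk²` built in. -/
noncomputable def omega (γ β k x : ℝ) : ℝ :=
  k^2 * x * ((γ/k^2 + β*k^2) - β*k^2*x^2) - γ/x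

/-!
For `k ≠ 0`, `omega γ β k x = (γ + β k⁴) x - β k⁴ x³ - γ / x`, so `y - x` factors out of
`omega γ β k y - omega γ β k x`. For `y = x + 1` the cofactor depends on `x` only through
`p = x (x + 1)`, and a collision means `γ (1 + p) = 3 β k⁴ p²`. Since `p ≥ -1/4`, the left side is
positive when `0 < γ`, while the right side is nonpositive when `β ≤ 0`.
-/

lemma mul_omega_sub_omega (γ β : ℝ) {k x y : ℝ} (hk : k ≠ 0) (hx : x ≠ 0) (hy : y ≠ 0) :
    x * y * (omega γ β k y - omega γ β k x) =
      (y - x) * (γ * (1 + x * y) - β * k ^ 4 * (x * y) * (x ^ 2 + x * y + y ^ 2 - 1)) := by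
  unfold omega
  field_simp
  ring

lemma omega_eq_omega_iff (γ β : ℝ) {k x y : ℝ} (hk : k ≠ 0) (hx : x ≠ 0) (hy : y ≠ 0)
    (hxy : x ≠ y) :
    omega γ β k x = omega γ β k y ↔
      γ * (1 + x * y) = β * k ^ 4 * (x * y) * (x ^ 2 + x * y + y ^ 2 - 1) := by
  rw [eq_comm, ← sub_eq_zero, ← mul_eq_zero_iff_left (mul_ne_zero hx hy),
    mul_omega_sub_omega γ β hk hx hy, mul_eq_zero_iff_left (sub_ne_zero.2 hxy.symm), sub_eq_zero]

lemma omega_eq_omega_add_one_iff (γ β : ℝ) {k x : ℝ} (hk : k ≠ 0) (hx : x ≠ 0)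
    (hx1 : x + 1 ≠ 0) :
    omega γ β k x = omega γ β k (x + 1) ↔
      γ * (1 + x * (x + 1)) = 3 * β * k ^ 4 * (x * (x + 1)) ^ 2 := by
  have cofactor : x ^ 2 + x * (x + 1) + (x + 1) ^ 2 - 1 = 3 * (x * (x + 1)) := by ring
  rw [omega_eq_omega_iff γ β hk hx hx1 (lt_add_one x).ne, cofactor]
  ring_nf

theorem no_adjacent_collision_neg_beta_general {γ β k x : ℝ} (hγ : 0 < γ) (hβ : β ≤ 0)
    (hk : k ≠ 0) (hx : x ≠ 0) (hx1 : x + 1 ≠ 0) :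
    omega γ β k x ≠ omega γ β k (x + 1) := by
  rw [Ne, omega_eq_omega_add_one_iff γ β hk hx hx1]
  have lhs_pos : 0 < γ * (1 + x * (x + 1)) :=
    mul_pos hγ (by linarith [sq_nonneg (2 * x + 1)])
  have rhs_nonpos : 3 * β * k ^ 4 * (x * (x + 1)) ^ 2 ≤ 0 := by
    rw [mul_assoc]
    exact mul_nonpos_of_nonpos_of_nonneg (by linarith) (by positivity)
  exact (rhs_nonpos.trans_lt lhs_pos).ne'

lemma intCast_add_ne_zero {R : Type*} [Ring R] [PartialOrder R] [IsStrictOrderedRing R] {ξ : R}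
    (h0 : 0 < ξ) (h1 : ξ < 1) (n : ℤ) : (n : R) + ξ ≠ 0 := by
  intro h
  obtain rfl : ξ = ((-n : ℤ) : R) := by
    rw [Int.cast_neg]
    exact eq_neg_of_add_eq_zero_right h
  norm_cast at h0 h1
  lia

theorem no_adjacent_collision_neg_beta (γ β : ℝ) (hγ : 0 < γ) (hβ : β < 0) :
    ∀ (n : ℤ) (ξ k : ℝ), 0 < ξ → ξ ≤ 1/2 → 0 < k →
      omega γ β k ((n : ℝ) + ξ) ≠ omega γ β k ((n : ℝ) + 1 + ξ) := by
  intro n ξ k h0 h1 hk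
  have hξ : ξ < 1 := by linarith
  have hn1 : (n : ℝ) + ξ + 1 ≠ 0 := by
    simpa [add_right_comm] using intCast_add_ne_zero h0 hξ (n + 1)
  rw [add_right_comm]
  exact no_adjacent_collision_neg_beta_general hγ hβ.le hk.ne' (intCast_add_ne_zero h0 hξ n) hn1
end

section
/- Suppose γ > 0 and β < 0. Then for all integers n, m with 0 ≤ n < m, every Floquet exponent ξ ∈ (0, 1/2], and every k > 0, the collision ω(n+ξ) = ω(m+ξ) does NOT hold, where c₀ = γ/k² + βk² and ω(x) = k²·x·(c₀ − βk²x²) − γ/x. -/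
/-!
The quotient `(ω y - ω x) / (y - x)` is the sum of a dispersive part proportional to `-β` and
a rotational part proportional to `γ`. For `x` and `y` of the same sign the rotational part is
positive, and the dispersive part is nonnegative as soon as `x² + x y + y² ≥ 1`. The latter holds
for distinct nonnegative modes because the larger one is at least `1`.
-/

theorem omega_sub_omega (γ β : ℝ) {k x y : ℝ} (hk : k ≠ 0) (hx : x ≠ 0) (hy : y ≠ 0) :
    omega γ β k y - omega γ β k x =
      (y - x) * (γ * (1 + 1 / (x * y)) + -β * k ^ 4 * (x ^ 2 + x * y + y ^ 2 - 1)) := by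
  unfold omega
  field_simp
  ring

theorem omega_lt_omega {γ β k x y : ℝ} (hγ : 0 < γ) (hβ : β ≤ 0) (hk : k ≠ 0)
    (hsign : 0 < x * y) (hxy : x < y) (hq : 1 ≤ x ^ 2 + x * y + y ^ 2) :
    omega γ β k x < omega γ β k y := by
  have rotational_pos : 0 < γ * (1 + 1 / (x * y)) := by positivity
  have dispersive_nonneg : 0 ≤ -β * k ^ 4 * (x ^ 2 + x * y + y ^ 2 - 1) :=
    mul_nonneg (mul_nonneg (neg_nonneg.mpr hβ) (by positivity)) (sub_nonneg.mpr hq)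
  rw [← sub_pos,
    omega_sub_omega γ β hk (left_ne_zero_of_mul hsign.ne') (right_ne_zero_of_mul hsign.ne')]
  exact mul_pos (sub_pos.mpr hxy) (add_pos_of_pos_of_nonneg rotational_pos dispersive_nonneg)

theorem no_nonneg_modes_collision_neg_beta_general {γ β k x y : ℝ} (hγ : 0 < γ) (hβ : β ≤ 0)
    (hk : k ≠ 0) (hsign : 0 < x * y) (hne : x ≠ y) (hq : 1 ≤ x ^ 2 + x * y + y ^ 2) :
    omega γ β k x ≠ omega γ β k y := by
  rcases hne.lt_or_gt with hxy | hyx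
  · exact (omega_lt_omega hγ hβ hk hsign hxy hq).ne
  · exact (omega_lt_omega hγ hβ hk (by linarith) hyx (by linarith)).ne'

theorem no_nonneg_modes_collision_neg_beta (γ β : ℝ) (hγ : 0 < γ) (hβ : β < 0) :
    ∀ (n m : ℤ), 0 ≤ n → n < m →
      ∀ ξ k : ℝ, 0 < ξ → ξ ≤ 1/2 → 0 < k →
        omega γ β k ((n : ℝ) + ξ) ≠ omega γ β k ((m : ℝ) + ξ) := by
  intro n m hn hnm ξ k hξ _ hk
  have hx : 0 < n + ξ := add_pos_of_nonneg_of_pos (Int.cast_nonneg hn) hξ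
  have hxy : n + ξ + 1 ≤ m + ξ := by linarith [(mod_cast hnm : (n : ℝ) + 1 ≤ m)]
  exact no_nonneg_modes_collision_neg_beta_general hγ hβ.le hk.ne'
    (mul_pos hx (by linarith)) (by linarith) (by nlinarith)
end

section
/- Let γ > 0, β ≠ 0, k > 0, c₀ = γ/k² + βk², ω(x) = k²·x·(c₀ − βk²x²) − γ/x, let n ≠ m be integers, and let ξ ∈ (0, 1/2]. Then ω(n+ξ) = 0 and ω(m+ξ) = 0 both hold if and only if β > 0, ξ = 1/2, m = −n − 1, and β·k⁴·(n + 1/2)² = γ. In particular, a collision of the two eigenvalues at the origin of the imaginary axis occurs only for positive dispersion β > 0, at Floquet exponent ξ = 1/2, for mode pairs {n, −n−1}, and at the wavenumber k = (γ/(β(n+1/2)²))^{1/4}. -/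
/-!
Since `x * omega γ β k x = (x² - 1) * (γ - βk⁴x²)`, the zeros of the dispersion function are `±1`,
which the non-integral numbers `n + ξ` avoid, and the opposite solutions of `βk⁴x² = γ`. Two
distinct modes at the origin therefore satisfy `m + ξ = -(n + ξ)`, so that `2ξ = -(n + m)` is an
integer strictly between `0` and `2`.
-/

theorem mul_sq_eq_and_mul_sq_eq_iff {R : Type*} [CommRing R] [NoZeroDivisors R] {a c x y : R}
    (hc : c ≠ 0) (hxy : x ≠ y) :
    a * x ^ 2 = c ∧ a * y ^ 2 = c ↔ y = -x ∧ a * x ^ 2 = c := by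
  constructor
  · rintro ⟨hx, hy⟩
    have ha : a ≠ 0 := by
      rintro rfl
      exact hc (by rw [← hx, zero_mul])
    have hsq : y ^ 2 = x ^ 2 := mul_left_cancel₀ ha (hy.trans hx.symm)
    exact ⟨(sq_eq_sq_iff_eq_or_eq_neg.mp hsq).resolve_left hxy.symm, hx⟩
  · rintro ⟨rfl, hx⟩
    exact ⟨hx, by rwa [neg_sq]⟩

theorem intCast_add_eq_neg_intCast_add_iff {K : Type*} [Field K] [LinearOrder K]
    [IsStrictOrderedRing K] {ξ : K} (hξ0 : 0 < ξ) (hξ1 : ξ < 1) {n m : ℤ} :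
    (m : K) + ξ = -(n + ξ) ↔ ξ = 1 / 2 ∧ m = -n - 1 := by
  constructor
  · intro h
    have lower : -2 < n + m := by exact_mod_cast (by linarith : (-2 : K) < n + m)
    have upper : n + m < 0 := by exact_mod_cast (by linarith : (n : K) + m < 0)
    obtain rfl : m = -n - 1 := by lia
    push_cast at h
    exact ⟨by linarith, rfl⟩
  · rintro ⟨rfl, rfl⟩
    push_cast
    ring

theorem omega_eq_div {γ β k x : ℝ} (hk : k ≠ 0) (hx : x ≠ 0) :
    omega γ β k x = (x ^ 2 - 1) * (γ - β * k ^ 4 * x ^ 2) / x := by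
  unfold omega
  field_simp
  ring

theorem omega_eq_zero_iff {γ β k x : ℝ} (hk : k ≠ 0) (hx : x ≠ 0) :
    omega γ β k x = 0 ↔ x ^ 2 = 1 ∨ β * k ^ 4 * x ^ 2 = γ := by
  rw [omega_eq_div hk hx, div_eq_zero_iff, or_iff_left hx, mul_eq_zero, sub_eq_zero, sub_eq_zero,
    eq_comm (a := γ)]

theorem omega_eq_zero_iff_of_fract_ne_zero {γ β k x : ℝ} (hk : k ≠ 0) (hx : Int.fract x ≠ 0) :
    omega γ β k x = 0 ↔ β * k ^ 4 * x ^ 2 = γ := by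
  have ne_intCast (j : ℤ) : x ≠ j := by
    rintro rfl
    exact hx (Int.fract_intCast j)
  have sq_ne_one : x ^ 2 ≠ 1 :=
    sq_ne_one_iff.mpr ⟨by simpa using ne_intCast 1, by simpa using ne_intCast (-1)⟩
  rw [omega_eq_zero_iff hk (by simpa using ne_intCast 0), or_iff_right sq_ne_one]

theorem collision_at_origin_general {γ β k ξ : ℝ} (hγ : 0 < γ) (hk : k ≠ 0) {n m : ℤ}
    (hnm : n ≠ m) (hξ0 : 0 < ξ) (hξ1 : ξ < 1) :
    (omega γ β k (n + ξ) = 0 ∧ omega γ β k (m + ξ) = 0) ↔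
      (0 < β ∧ ξ = 1 / 2 ∧ m = -n - 1 ∧ β * k ^ 4 * ((n : ℝ) + 1 / 2) ^ 2 = γ) := by
  have fract_ne_zero (j : ℤ) : Int.fract (j + ξ) ≠ 0 := by
    rw [Int.fract_intCast_add, Int.fract_eq_self.mpr ⟨hξ0.le, hξ1⟩]
    exact hξ0.ne'
  have modes_ne : (n : ℝ) + ξ ≠ m + ξ := by simpa using hnm
  rw [omega_eq_zero_iff_of_fract_ne_zero hk (fract_ne_zero n),
    omega_eq_zero_iff_of_fract_ne_zero hk (fract_ne_zero m),
    mul_sq_eq_and_mul_sq_eq_iff hγ.ne' modes_ne, intCast_add_eq_neg_intCast_add_iff hξ0 hξ1]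
  constructor
  · rintro ⟨⟨rfl, hm⟩, hn⟩
    have hβ : 0 < β := by
      rw [← hn, mul_assoc] at hγ
      exact pos_of_mul_pos_left hγ (by positivity)
    exact ⟨hβ, rfl, hm, hn⟩
  · rintro ⟨-, rfl, hm, hn⟩
    exact ⟨⟨rfl, hm⟩, hn⟩

theorem collision_at_origin (γ β k : ℝ) (hγ : 0 < γ) (hβ : β ≠ 0) (hk : 0 < k)
    (n m : ℤ) (hnm : n ≠ m) (ξ : ℝ) (hξ0 : 0 < ξ) (hξ1 : ξ ≤ 1/2) :
    (omega γ β k ((n : ℝ) + ξ) = 0 ∧ omega γ β k ((m : ℝ) + ξ) = 0) ↔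
      (0 < β ∧ ξ = 1/2 ∧ m = -n - 1 ∧ β * k^4 * ((n : ℝ) + 1/2)^2 = γ) :=
  collision_at_origin_general hγ hk.ne' hnm hξ0 (hξ1.trans_lt one_half_lt_one)
end

section
/- Suppose γ > 0 and β > 0, and let k > 0 satisfy k⁴ ≥ 4γ/β. Then there exists a Floquet exponent ξ ∈ (0, 1/2] such that ω(−1+ξ) = ω(ξ), where c₀ = γ/k² + βk² and ω(x) = k²·x·(c₀ − βk²x²) − γ/x; that is, for every wavenumber k ≥ (4γ/β)^{1/4} the modes −1 and 0 collide on the imaginary axis for some Floquet exponent. -/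
/-!
In terms of `p = ξ (1 - ξ)`, which increases from `0` to `1/4` as `ξ` runs over `[0, 1/2]`, the
frequency gap `ω(ξ) - ω(-1 + ξ)` equals `3βk⁴p + γ - γ/p`. It vanishes when `3βk⁴p² = γ(1 - p)`.
At `p = 0` the right-hand side dominates, and at `p = 1/4` the left-hand side does precisely when
`4γ ≤ βk⁴`, so the intermediate value theorem produces a collision.
-/

open Set

theorem omega_sub_omega_neg_one_add (γ β : ℝ) {k ξ : ℝ} (hk : k ≠ 0) (hξ₀ : ξ ≠ 0) (hξ₁ : ξ ≠ 1) :
    omega γ β k ξ - omega γ β k (-1 + ξ) =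
      3 * (β * k ^ 4) * (ξ * (1 - ξ)) + γ - γ / (ξ * (1 - ξ)) := by
  have hleft : -1 + ξ ≠ 0 := by rwa [neg_add_eq_sub, sub_ne_zero]
  have hright : 1 - ξ ≠ 0 := sub_ne_zero.mpr hξ₁.symm
  unfold omega
  field_simp
  ring

theorem omega_neg_one_add_eq_iff {γ β k ξ : ℝ} (hk : k ≠ 0) (hξ₀ : ξ ≠ 0) (hξ₁ : ξ ≠ 1) :
    omega γ β k (-1 + ξ) = omega γ β k ξ ↔
      3 * (β * k ^ 4) * (ξ * (1 - ξ)) ^ 2 = γ * (1 - ξ * (1 - ξ)) := by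
  have hp : ξ * (1 - ξ) ≠ 0 := mul_ne_zero hξ₀ (sub_ne_zero.mpr hξ₁.symm)
  rw [eq_comm, ← sub_eq_zero, omega_sub_omega_neg_one_add γ β hk hξ₀ hξ₁, sub_eq_zero,
    eq_div_iff hp]
  constructor <;> intro h <;> linear_combination h

theorem exists_mem_Ioc_mul_one_sub_eq {a p : ℝ} (ha : 0 ≤ a) (hp : p ∈ Ioc 0 (a * (1 - a))) :
    ∃ ξ ∈ Ioc 0 a, ξ * (1 - ξ) = p :=
  intermediate_value_Ioc (f := fun ξ : ℝ ↦ ξ * (1 - ξ)) ha (by fun_prop) (by simpa using hp)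

theorem exists_mem_Ioc_mul_sq_eq_mul_one_sub {a b r : ℝ} (hb : 0 < b) (hr : 0 ≤ r)
    (h : b * (1 - r) ≤ a * r ^ 2) :
    ∃ p ∈ Ioc 0 r, a * p ^ 2 = b * (1 - p) := by
  have hcont : ContinuousOn (fun p : ℝ ↦ a * p ^ 2 - b * (1 - p)) (Icc 0 r) := by fun_prop
  have hsign : (0 : ℝ) ∈ Ioc (a * 0 ^ 2 - b * (1 - 0)) (a * r ^ 2 - b * (1 - r)) :=
    ⟨by linarith, sub_nonneg.mpr h⟩
  obtain ⟨p, hp, hzero⟩ := intermediate_value_Ioc hr hcont hsign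
  exact ⟨p, hp, sub_eq_zero.mp hzero⟩

theorem collision_above_threshold (γ β k : ℝ) (hγ : 0 < γ) (hβ : 0 < β)
    (hk : 0 < k) (hk4 : 4*γ/β ≤ k^4) :
    ∃ ξ : ℝ, 0 < ξ ∧ ξ ≤ 1/2 ∧ omega γ β k (-1 + ξ) = omega γ β k ξ := by
  have hthreshold : 4 * γ ≤ k ^ 4 * β := (div_le_iff₀ hβ).mp hk4
  obtain ⟨p, hp, hroot⟩ : ∃ p ∈ Ioc 0 (1 / 4), 3 * (β * k ^ 4) * p ^ 2 = γ * (1 - p) :=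
    exists_mem_Ioc_mul_sq_eq_mul_one_sub hγ (by norm_num) (by linarith)
  obtain ⟨ξ, ⟨hξ_pos, hξ_le⟩, rfl⟩ : ∃ ξ ∈ Ioc 0 (1 / 2), ξ * (1 - ξ) = p :=
    exists_mem_Ioc_mul_one_sub_eq (by norm_num) (by convert hp using 2; norm_num)
  have hξ_ne_one : ξ ≠ 1 := (hξ_le.trans_lt (by norm_num)).ne
  exact ⟨ξ, hξ_pos, hξ_le, (omega_neg_one_add_eq_iff hk.ne' hξ_pos.ne' hξ_ne_one).mpr hroot⟩
end

section
/- Let γ, β, k, a be real numbers with k > 0 and 3γ − 12βk⁴ ≠ 0. Set c₀ = γ/k² + βk², A₂ = 2k²/(3γ − 12βk⁴), c = c₀ + a²A₂, and define w : ℝ → ℝ by w(z) = a·cos z + a²A₂·cos 2z. Then for every real z, c·k²·w''(z) + β·k⁴·w''''(z) − k²·(w²)''(z) + γ·w(z) = 9a³A₂k²·cos 3z + 4a⁴A₂²k²·(2cos 4z − cos 2z). In particular the traveling-wave equation ck²w'' + βk⁴w'''' − k²(w²)'' + γw = 0 is satisfied up to terms of order a³. -/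
/-!
On `cos (ν z)` the linear part of the profile equation acts as multiplication by
`γ - c k² ν² + β k⁴ ν⁴`, while squaring couples two frequencies into their difference and sum. For
`p cos z + q cos 2z` this leaves four harmonics. The first vanishes when `c k²` exceeds its
linear value `γ + β k⁴` by `k² q`. With `p = a` and `q = a² A₂`, the given `A₂` is then the value
that cancels the second harmonic at order `a²`.
-/

open Finset Real

section CosineSum

variable {ι : Type*} (s : Finset ι) (b ω : ι → ℝ)

/-- The trigonometric sum with amplitudes `b i` and frequencies `ω i`. The frequencies are arbitrary
reals, possibly repeated, so that squares of such sums are again of this form. -/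
noncomputable def cosineSum (z : ℝ) : ℝ := ∑ i ∈ s, b i * cos (ω i * z)

theorem contDiff_cosineSum {n : WithTop ℕ∞} : ContDiff ℝ n (cosineSum s b ω) := by
  unfold cosineSum
  fun_prop

theorem iteratedDeriv_even_cos_const_mul (n : ℕ) (ν z : ℝ) :
    iteratedDeriv (2 * n) (fun z ↦ cos (ν * z)) z = (-ν ^ 2) ^ n * cos (ν * z) := by
  simp only [iteratedDeriv_comp_const_mul contDiff_cos, iteratedDeriv_even_cos, Pi.mul_apply,
    Pi.pow_apply, Pi.neg_apply, Pi.one_apply]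
  rw [neg_pow (ν ^ 2), ← pow_mul]
  ring

theorem iteratedDeriv_even_cosineSum (n : ℕ) (z : ℝ) :
    iteratedDeriv (2 * n) (cosineSum s b ω) z =
      cosineSum s (fun i ↦ (-ω i ^ 2) ^ n * b i) ω z := by
  unfold cosineSum
  rw [iteratedDeriv_fun_sum fun i _ ↦ by fun_prop]
  refine sum_congr rfl fun i _ ↦ ?_
  rw [iteratedDeriv_const_mul_field, iteratedDeriv_even_cos_const_mul]
  ring

theorem cosineSum_sq (z : ℝ) :
    cosineSum s b ω z ^ 2 =
      cosineSum (s ×ˢ s) (fun p ↦ b p.1 * b p.2 / 2) (fun p ↦ ω p.1 - ω p.2) z +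
        cosineSum (s ×ˢ s) (fun p ↦ b p.1 * b p.2 / 2) (fun p ↦ ω p.1 + ω p.2) z := by
  simp only [cosineSum, sq, sum_mul_sum, ← sum_product', ← sum_add_distrib]
  refine sum_congr rfl fun p _ ↦ ?_
  rw [sub_mul, add_mul, cos_sub, cos_add]
  ring

theorem iteratedDeriv_two_cosineSum_sq (z : ℝ) :
    iteratedDeriv 2 (fun z ↦ cosineSum s b ω z ^ 2) z =
      -∑ i ∈ s, ∑ j ∈ s, b i * b j / 2 *
        ((ω i - ω j) ^ 2 * cos ((ω i - ω j) * z) + (ω i + ω j) ^ 2 * cos ((ω i + ω j) * z)) := by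
  simp only [cosineSum_sq]
  rw [iteratedDeriv_fun_add (contDiff_cosineSum ..).contDiffAt (contDiff_cosineSum ..).contDiffAt,
    iteratedDeriv_even_cosineSum _ _ _ 1, iteratedDeriv_even_cosineSum _ _ _ 1]
  simp only [cosineSum, ← sum_product', ← sum_add_distrib, ← sum_neg_distrib]
  refine sum_congr rfl fun p _ ↦ ?_
  ring

end CosineSum

section Ostrovsky

variable (γ β k c : ℝ)

/-- The left-hand side of the profile equation `c k² w'' + β k⁴ w'''' - k² (w²)'' + γ w = 0` for
traveling waves `w (k (x - c t))` of the Ostrovsky equation. -/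
noncomputable def ostrovskyResidual (w : ℝ → ℝ) (z : ℝ) : ℝ :=
  c * k ^ 2 * iteratedDeriv 2 w z + β * k ^ 4 * iteratedDeriv 4 w z
    - k ^ 2 * iteratedDeriv 2 (fun z ↦ w z ^ 2) z + γ * w z

/-- The Fourier symbol, at frequency `ν`, of the linear part of `ostrovskyResidual`. -/
def ostrovskySymbol (ν : ℝ) : ℝ := γ - c * k ^ 2 * ν ^ 2 + β * k ^ 4 * ν ^ 4

theorem ostrovskyResidual_cosineSum {ι : Type*} (s : Finset ι) (b ω : ι → ℝ) (z : ℝ) :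
    ostrovskyResidual γ β k c (cosineSum s b ω) z =
      cosineSum s (fun i ↦ ostrovskySymbol γ β k c (ω i) * b i) ω z +
        k ^ 2 * ∑ i ∈ s, ∑ j ∈ s, b i * b j / 2 *
          ((ω i - ω j) ^ 2 * cos ((ω i - ω j) * z) +
            (ω i + ω j) ^ 2 * cos ((ω i + ω j) * z)) := by
  have linear_part :
      c * k ^ 2 * iteratedDeriv 2 (cosineSum s b ω) z +
          β * k ^ 4 * iteratedDeriv 4 (cosineSum s b ω) z + γ * cosineSum s b ω z =
        cosineSum s (fun i ↦ ostrovskySymbol γ β k c (ω i) * b i) ω z := by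
    rw [iteratedDeriv_even_cosineSum _ _ _ 1, iteratedDeriv_even_cosineSum _ _ _ 2]
    simp only [cosineSum, ostrovskySymbol, mul_sum, ← sum_add_distrib]
    refine sum_congr rfl fun i _ ↦ ?_
    ring
  rw [ostrovskyResidual, iteratedDeriv_two_cosineSum_sq, ← linear_part]
  ring

theorem ostrovskyResidual_two_mode (p q z : ℝ) :
    ostrovskyResidual γ β k c (fun z ↦ p * cos z + q * cos (2 * z)) z =
      (ostrovskySymbol γ β k c 1 + k ^ 2 * q) * p * cos z +
        (ostrovskySymbol γ β k c 2 * q + 2 * k ^ 2 * p ^ 2) * cos (2 * z) +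
        9 * k ^ 2 * p * q * cos (3 * z) + 8 * k ^ 2 * q ^ 2 * cos (4 * z) := by
  have profile_eq :
      (fun z ↦ p * cos z + q * cos (2 * z)) = cosineSum univ ![p, q] ![1, 2] := by
    ext z
    simp [cosineSum]
  have cos_difference : cos ((1 - 2) * z) = cos z := by
    rw [← cos_neg]
    ring_nf
  rw [profile_eq, ostrovskyResidual_cosineSum]
  simp only [cosineSum, Fin.sum_univ_two, Matrix.cons_val_zero, Matrix.cons_val_one,
    cos_difference]
  ring_nf

variable {γ β k c}

theorem ostrovskySymbol_one_of_waveSpeed {q : ℝ} (hk : k ≠ 0)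
    (hc : c = (γ / k ^ 2 + β * k ^ 2) + q) :
    ostrovskySymbol γ β k c 1 = -(k ^ 2 * q) := by
  rw [ostrovskySymbol, hc]
  field_simp
  ring

theorem ostrovskySymbol_two_of_waveSpeed {q : ℝ} (hk : k ≠ 0)
    (hc : c = (γ / k ^ 2 + β * k ^ 2) + q) :
    ostrovskySymbol γ β k c 2 = -(3 * γ - 12 * β * k ^ 4) - 4 * k ^ 2 * q := by
  rw [ostrovskySymbol, hc]
  field_simp
  ring

end Ostrovsky

theorem second_order_residual (γ β k a A₂ c : ℝ) (hk : 0 < k)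
    (hden : 3*γ - 12*β*k^4 ≠ 0)
    (hA₂ : A₂ = 2*k^2 / (3*γ - 12*β*k^4))
    (hc : c = (γ/k^2 + β*k^2) + a^2*A₂) :
    ∀ z : ℝ,
      c * k^2 * iteratedDeriv 2 (fun z => a * Real.cos z + a^2*A₂ * Real.cos (2*z)) z
        + β * k^4 * iteratedDeriv 4 (fun z => a * Real.cos z + a^2*A₂ * Real.cos (2*z)) z
        - k^2 * iteratedDeriv 2
            (fun z => (a * Real.cos z + a^2*A₂ * Real.cos (2*z))^2) z
        + γ * (a * Real.cos z + a^2*A₂ * Real.cos (2*z))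
      = 9*a^3*A₂*k^2 * Real.cos (3*z)
        + 4*a^4*A₂^2*k^2 * (2*Real.cos (4*z) - Real.cos (2*z)) := by
  intro z
  have second_harmonic : A₂ * (3 * γ - 12 * β * k ^ 4) = 2 * k ^ 2 := by
    rw [hA₂, div_mul_cancel₀ _ hden]
  change ostrovskyResidual γ β k c (fun z ↦ a * cos z + a ^ 2 * A₂ * cos (2 * z)) z = _
  rw [ostrovskyResidual_two_mode, ostrovskySymbol_one_of_waveSpeed hk.ne' hc,
    ostrovskySymbol_two_of_waveSpeed hk.ne' hc]
  linear_combination -a ^ 2 * cos (2 * z) * second_harmonic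
end
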